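/- Let P be a finite graded simplicial poset of rank n ≥ 2 with h-vector (h_0, …, h_n), let P̂ be P with a top element adjoined, and let P̂* be the dual poset of P̂. Then the γ-polynomials of the Chow and augmented Chow polynomials satisfy: γ(H_{P̂}; x) = Σ_{k=0}^n h_k · p_{n,k}^{∅⊆[1,n−1]}(x), γ(H_{P̂*}; x) = Σ_{k=0}^n h_k · p_{n,k}^{∅⊆[2,n]}(x), and γ(H^aug_{P̂}; x) = γ(H^aug_{P̂*}; x) = Σ_{k=0}^n h_k · p_{n,k}^{∅⊆[1,n]}(x). -/

import Mathlib

open Polynomial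

noncomputable section

/-- A real polynomial is *real-rooted* if all of its complex roots are real.
(The zero polynomial is real-rooted by convention.) -/
def RealRooted (f : Polynomial ℝ) : Prop :=
  ∀ z ∈ (f.map (algebraMap ℝ ℂ)).roots, z.im = 0

/-- All coefficients of the polynomial are nonnegative. -/
def NonnegCoeffs (f : Polynomial ℝ) : Prop := ∀ i, 0 ≤ f.coeff i

/-- The list of real roots of `f`, with multiplicity, in weakly decreasing order. -/
def descRoots (f : Polynomial ℝ) : List ℝ := (f.roots.sort (· ≤ ·)).reverse

/-- The interlacing condition on the weakly decreasing root sequences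
`α` of `f` and `β` of `g` : `β₁ ≥ α₁ ≥ β₂ ≥ α₂ ≥ …`, together with the
degree condition `deg g ∈ {deg f, deg f + 1}`. -/
def InterlacesAux (f g : Polynomial ℝ) : Prop :=
  (g.natDegree = f.natDegree ∨ g.natDegree = f.natDegree + 1) ∧
  (∀ (i : ℕ) (hf : i < (descRoots f).length) (hg : i < (descRoots g).length),
      (descRoots f).get ⟨i, hf⟩ ≤ (descRoots g).get ⟨i, hg⟩) ∧
  (∀ (i : ℕ) (hf : i < (descRoots f).length) (hg : i + 1 < (descRoots g).length),
      (descRoots g).get ⟨i + 1, hg⟩ ≤ (descRoots f).get ⟨i, hf⟩)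

/-- `f ⪯ g` : `f` interlaces `g`.  Both polynomials are required to be real-rooted;
by convention `0 ⪯ 0`, `0 ⪯ f`, `f ⪯ 0`, and any two polynomials of degree at most 1
interlace. -/
def Interlaces (f g : Polynomial ℝ) : Prop :=
  RealRooted f ∧ RealRooted g ∧
  (f = 0 ∨ g = 0 ∨ (f.natDegree ≤ 1 ∧ g.natDegree ≤ 1) ∨ InterlacesAux f g)

/-- A finite family of real-rooted polynomials is an interlacing sequence if
`F i ⪯ F j` for all `i < j`. -/
def InterlacingSeq {n : ℕ} (F : Fin n → Polynomial ℝ) : Prop :=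
  ∀ i j : Fin n, i < j → Interlaces (F i) (F j)

/-- A polynomial of degree `d` is palindromic if `coeff i = coeff (d - i)` for all `i ≤ d`. -/
def Palindromic (f : Polynomial ℝ) : Prop :=
  ∀ i ≤ f.natDegree, f.coeff i = f.coeff (f.natDegree - i)

/-- A set `S ⊆ ℕ` is isolated if `i ∈ S` implies `i + 1 ∉ S`. -/
def IsolatedSet (S : Finset ℕ) : Prop := ∀ i ∈ S, i + 1 ∉ S

instance : DecidablePred IsolatedSet := fun S =>
  decidable_of_iff (∀ i ∈ S, i + 1 ∉ S) Iff.rfl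

/-- The descent set of a permutation `w` of `{1, …, n+1}` (encoded as a permutation of
`Fin (n+1)`), as a subset of `{1, …, n}` : `Des(w) = {i ∈ {1,…,n} : w(i) > w(i+1)}`. -/
def desSet {n : ℕ} (w : Equiv.Perm (Fin (n + 1))) : Finset ℕ :=
  (Finset.univ.filter (fun i : Fin n => w i.succ < w i.castSucc)).image
    (fun i => i.val + 1)

/-- The polynomial `p_{n,k}^{S ⊆ T}(x) = Σ x^{des(w)}`, the sum over all permutations `w`
of `{1, …, n+1}` with `w(1) = k + 1`, `Des(w)` isolated and `S ⊆ Des(w) ⊆ T`. -/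
def pPoly (n k : ℕ) (S T : Finset ℕ) : Polynomial ℝ :=
  ∑ w ∈ Finset.univ.filter (fun w : Equiv.Perm (Fin (n + 1)) =>
      (w 0 : ℕ) = k ∧ IsolatedSet (desSet w) ∧ S ⊆ desSet w ∧ desSet w ⊆ T),
    Polynomial.X ^ (desSet w).card

/-- The shifted set `S - 1 = {i - 1 : i ∈ S} ∩ {1, …, n-1}`. -/
def shiftDown (n : ℕ) (S : Finset ℕ) : Finset ℕ :=
  (S.image (fun i => i - 1)) ∩ Finset.Icc 1 (n - 1)

section Poset

variable (P : Type*) [Fintype P] [PartialOrder P] [OrderBot P]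

/-- A finite poset `P` with a minimum is simplicial of rank `n` if for every maximal
element `m` the interval `[⊥, m]` is order-isomorphic to the boolean lattice of
subsets of an `n`-element set. -/
def SimplicialOfRank (n : ℕ) : Prop :=
  ∀ m : P, IsMax m → Nonempty ((Set.Icc (⊥ : P) m) ≃o Finset (Fin n))

variable {P}

/-- `rk` is a rank function: `rk ⊥ = 0` and ranks increase by one along covers. -/
def IsRankFunction (rk : P → ℕ) : Prop :=
  rk ⊥ = 0 ∧ ∀ a b : P, a ⋖ b → rk b = rk a + 1

/-- `f_{i-1}` : the number of elements of `P` of rank `i`. -/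
def fvec (rk : P → ℕ) (i : ℕ) : ℕ := (Finset.univ.filter (fun x => rk x = i)).card

/-- The generating polynomial `Σ_{i=0}^n h_i x^i = Σ_{i=0}^n f_{i-1} x^i (1-x)^{n-i}`
of the h-vector of `P`. -/
def hPoly (rk : P → ℕ) (n : ℕ) : Polynomial ℤ :=
  ∑ i ∈ Finset.range (n + 1),
    Polynomial.C (fvec rk i : ℤ) * Polynomial.X ^ i * (1 - Polynomial.X) ^ (n - i)

/-- The h-vector entry `h_k` of `P`. -/
def hvec (rk : P → ℕ) (n k : ℕ) : ℤ := (hPoly rk n).coeff k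

/-- The flag f-vector `α_{P̂}(T)` : the number of chains in `P̂ ∖ {0̂, 1̂} = P ∖ {⊥}`
whose set of ranks is exactly `T`. -/
def flagF (rk : P → ℕ) (T : Finset ℕ) : ℕ :=
  Nat.card {c : Finset P // IsChain (· ≤ ·) (c : Set P) ∧ (⊥ : P) ∉ c ∧ c.image rk = T}

/-- The flag h-vector `β_{P̂}(S) = Σ_{T ⊆ S} (-1)^{|S ∖ T|} α_{P̂}(T)`. -/
def flagH (rk : P → ℕ) (S : Finset ℕ) : ℤ :=
  ∑ T ∈ S.powerset, (-1) ^ ((S \ T).card) * (flagF rk T : ℤ)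

/-- The flag h-vector of the dual poset `P̂*` : `β_{P̂*}(S) = β_{P̂}({n+1-s : s ∈ S})`. -/
def flagHDual (rk : P → ℕ) (n : ℕ) (S : Finset ℕ) : ℤ :=
  flagH rk (S.image (fun s => n + 1 - s))

/-- The Chow polynomial
`H_{P̂}(x) = Σ_{S ⊆ {2,…,n} isolated} β_{P̂}(S) x^{|S|} (1+x)^{n-2|S|}`. -/
def chowPoly (rk : P → ℕ) (n : ℕ) : Polynomial ℝ :=
  ∑ S ∈ (Finset.Icc 2 n).powerset.filter IsolatedSet,
    (flagH rk S : ℝ) • (Polynomial.X ^ S.card * (1 + Polynomial.X) ^ (n - 2 * S.card))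

/-- The augmented Chow polynomial
`H^aug_{P̂}(x) = Σ_{S ⊆ {1,…,n} isolated} β_{P̂}(S) x^{|S|} (1+x)^{n+1-2|S|}`. -/
def chowAugPoly (rk : P → ℕ) (n : ℕ) : Polynomial ℝ :=
  ∑ S ∈ (Finset.Icc 1 n).powerset.filter IsolatedSet,
    (flagH rk S : ℝ) • (Polynomial.X ^ S.card * (1 + Polynomial.X) ^ (n + 1 - 2 * S.card))

/-- The Chow polynomial of the dual poset `P̂*`. -/
def chowDualPoly (rk : P → ℕ) (n : ℕ) : Polynomial ℝ :=
  ∑ S ∈ (Finset.Icc 2 n).powerset.filter IsolatedSet,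
    (flagHDual rk n S : ℝ) • (Polynomial.X ^ S.card * (1 + Polynomial.X) ^ (n - 2 * S.card))

/-- The augmented Chow polynomial of the dual poset `P̂*`. -/
def chowAugDualPoly (rk : P → ℕ) (n : ℕ) : Polynomial ℝ :=
  ∑ S ∈ (Finset.Icc 1 n).powerset.filter IsolatedSet,
    (flagHDual rk n S : ℝ) • (Polynomial.X ^ S.card * (1 + Polynomial.X) ^ (n + 1 - 2 * S.card))

end Poset

end


theorem aux_gamma_unique (d : ℕ) (c : ℕ → ℝ)
    (h : ∑ i ∈ Finset.range (d / 2 + 1),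
      Polynomial.C (c i) * Polynomial.X ^ i * (1 + Polynomial.X) ^ (d - 2 * i) = 0) :
    ∀ i, i < d / 2 + 1 → c i = 0 := by
  intro i
  induction i using Nat.strong_induction_on with
  | _ i ih =>
    intro hi
    have h' := congrArg (fun p => Polynomial.coeff p i) h
    simp only [Polynomial.finsetSum_coeff, Polynomial.coeff_zero] at h'
    rw [Finset.sum_eq_single i] at h'
    · rw [mul_assoc, Polynomial.coeff_C_mul, Polynomial.coeff_X_pow_mul'] at h'
      simpa [Polynomial.coeff_zero_eq_eval_zero] using h'
    · intro j hj hne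
      rw [mul_assoc, Polynomial.coeff_C_mul, Polynomial.coeff_X_pow_mul']
      rcases lt_or_gt_of_ne hne with hlt | hgt
      · rw [ih j hlt (by omega), zero_mul]
      · rw [if_neg (by omega), mul_zero]
    · intro hni
      exact absurd (Finset.mem_range.2 hi) hni

theorem aux_gamma (d : ℕ) (F : Finset (Finset ℕ)) (b : Finset ℕ → ℝ) (γ : ℕ → ℝ)
    (hF : ∀ S ∈ F, 2 * S.card ≤ d)
    (h : ∑ S ∈ F, b S • ((Polynomial.X : Polynomial ℝ) ^ S.card *
        (1 + Polynomial.X) ^ (d - 2 * S.card))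
      = ∑ i ∈ Finset.range (d / 2 + 1),
        Polynomial.C (γ i) * Polynomial.X ^ i * (1 + Polynomial.X) ^ (d - 2 * i)) :
    ∑ i ∈ Finset.range (d / 2 + 1), Polynomial.C (γ i) * Polynomial.X ^ i
      = ∑ S ∈ F, b S • (Polynomial.X : Polynomial ℝ) ^ S.card := by
  have hmap : ∀ S ∈ F, S.card ∈ Finset.range (d / 2 + 1) := by
    intro S hS
    have := hF S hS
    rw [Finset.mem_range]; omega
  have key : ∀ i, i < d / 2 + 1 →
      (∑ S ∈ F with S.card = i, b S) - γ i = 0 := by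
    apply aux_gamma_unique d (fun i => (∑ S ∈ F with S.card = i, b S) - γ i)
    rw [← Finset.sum_fiberwise_of_maps_to hmap] at h
    simp only [Polynomial.C_sub, sub_mul, Finset.sum_sub_distrib]
    rw [← h, sub_eq_zero]
    apply Finset.sum_congr rfl
    intro i _
    rw [map_sum, Finset.sum_mul, Finset.sum_mul]
    apply Finset.sum_congr rfl
    intro S hS
    rw [(Finset.mem_filter.1 hS).2, Polynomial.smul_eq_C_mul, mul_assoc]
  rw [← Finset.sum_fiberwise_of_maps_to hmap]
  apply Finset.sum_congr rfl
  intro i hi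
  have := key i (Finset.mem_range.1 hi)
  rw [← sub_eq_zero.1 this, map_sum, Finset.sum_mul]
  apply Finset.sum_congr rfl
  intro S hS
  rw [(Finset.mem_filter.1 hS).2, Polynomial.smul_eq_C_mul]

theorem aux_isolated_card (a n : ℕ) (S : Finset ℕ) (hS : S ⊆ Finset.Icc a n)
    (hi : IsolatedSet S) : 2 * S.card ≤ n + 2 - a := by
  have hinj : Function.Injective (fun i : ℕ => i + 1) := fun x y h => by simpa using h
  have hd : Disjoint S (S.image (fun i => i + 1)) := by
    rw [Finset.disjoint_left]
    intro x hx hx'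
    obtain ⟨y, hy, rfl⟩ := Finset.mem_image.1 hx'
    exact hi y hy hx
  have hsub : S ∪ S.image (fun i => i + 1) ⊆ Finset.Icc a (n + 1) := by
    intro x hx
    rcases Finset.mem_union.1 hx with hx | hx
    · have := Finset.mem_Icc.1 (hS hx)
      rw [Finset.mem_Icc]; omega
    · obtain ⟨y, hy, rfl⟩ := Finset.mem_image.1 hx
      have := Finset.mem_Icc.1 (hS hy)
      simp only [Finset.mem_Icc]; omega
  have := Finset.card_le_card hsub
  rw [Finset.card_union_of_disjoint hd, Finset.card_image_of_injective _ hinj,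
    Nat.card_Icc] at this
  omega

theorem aux_fh {P : Type*} [Fintype P] [PartialOrder P] [OrderBot P] (n t : ℕ) (ht : t ≤ n)
    (rk : P → ℕ) :
    (fvec rk t : ℝ) = ∑ k ∈ Finset.range (n + 1),
      (hvec rk n k : ℝ) * ((n - k).choose (n - t) : ℝ) := by
  have hdeg : (hPoly rk n).natDegree < n + 1 := by
    unfold hPoly
    apply Nat.lt_succ_of_le
    apply Polynomial.natDegree_sum_le_of_forall_le
    intro i hi
    have hi' := Finset.mem_range.1 hi
    have h1 : (1 - Polynomial.X : Polynomial ℤ).natDegree ≤ 1 := by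
      compute_degree
    calc _ ≤ (Polynomial.C (fvec rk i : ℤ) * Polynomial.X ^ i).natDegree
            + ((1 - Polynomial.X : Polynomial ℤ) ^ (n - i)).natDegree :=
          Polynomial.natDegree_mul_le
      _ ≤ i + (n - i) * 1 := by
          apply add_le_add
          · exact Polynomial.natDegree_C_mul_X_pow_le _ _
          · exact Polynomial.natDegree_pow_le_of_le _ h1
      _ ≤ n := by omega
  have key : (∑ k ∈ Finset.range (n + 1), Polynomial.C (hvec rk n k : ℝ) *
      (Polynomial.X ^ k * (1 + Polynomial.X) ^ (n - k)))
      = ∑ i ∈ Finset.range (n + 1), Polynomial.C (fvec rk i : ℝ) * Polynomial.X ^ i := by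
    apply Polynomial.eq_of_infinite_eval_eq
    apply Set.Infinite.mono _ (Set.Ioi_infinite (0 : ℝ))
    intro a ha
    have ha : 0 < a := ha
    have ha1 : (1 + a) ≠ 0 := by positivity
    have e1 : ((hPoly rk n).map (Int.castRingHom ℝ)).eval (a / (1 + a))
        = ∑ k ∈ Finset.range (n + 1), (hvec rk n k : ℝ) * (a / (1 + a)) ^ k := by
      rw [Polynomial.eval_eq_sum_range' (n := n + 1)]
      · apply Finset.sum_congr rfl
        intro k _
        simp [hvec]
      · exact lt_of_le_of_lt Polynomial.natDegree_map_le hdeg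
    have e2 : ((hPoly rk n).map (Int.castRingHom ℝ)).eval (a / (1 + a))
        = ∑ i ∈ Finset.range (n + 1), (fvec rk i : ℝ) * (a / (1 + a)) ^ i
            * (1 - a / (1 + a)) ^ (n - i) := by
      simp [hPoly, Polynomial.map_sum, Polynomial.eval_finsetSum]
    have e3 := congrArg (fun z => (1 + a) ^ n * z) (e1.symm.trans e2)
    simp only [Finset.mul_sum] at e3
    simp only [Set.mem_ofPred_eq, Polynomial.eval_finsetSum, Polynomial.eval_mul,
      Polynomial.eval_C, Polynomial.eval_pow, Polynomial.eval_X, Polynomial.eval_add,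
      Polynomial.eval_one]
    have hs : ∀ i ∈ Finset.range (n + 1), (1 + a) ^ n = (1 + a) ^ i * (1 + a) ^ (n - i) := by
      intro i hi
      have := Finset.mem_range.1 hi
      rw [← pow_add]; congr 1; omega
    calc _ = ∑ k ∈ Finset.range (n + 1), (1 + a) ^ n * ((hvec rk n k : ℝ) * (a / (1 + a)) ^ k) := by
          apply Finset.sum_congr rfl
          intro i hi
          rw [hs i hi, div_pow]
          field_simp
      _ = _ := e3
      _ = _ := by
          apply Finset.sum_congr rfl
          intro i hi
          have h1 : 1 - a / (1 + a) = 1 / (1 + a) := by field_simp; ring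
          rw [hs i hi, h1, div_pow, div_pow]
          field_simp
          simp
  have := congrArg (fun p => Polynomial.coeff p t) key
  simp only [Polynomial.finsetSum_coeff, Polynomial.coeff_C_mul, Polynomial.coeff_X_pow,
    Polynomial.coeff_X_pow_mul', Polynomial.coeff_one_add_X_pow] at this
  rw [Finset.sum_eq_single_of_mem (s := Finset.range (n + 1)) (a := t)
    (f := fun i => (fvec rk i : ℝ) * if t = i then 1 else 0)] at this
  · simp only [if_true, mul_one] at this
    rw [← this]
    apply Finset.sum_congr rfl
    intro k hk
    congr 1
    have := Finset.mem_range.1 hk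
    split_ifs with hkt
    · have : n - t = (n - k) - (t - k) := by omega
      rw [this, Nat.choose_symm (by omega)]
    · rw [Nat.choose_eq_zero_of_lt (by omega)]; simp
  · exact Finset.mem_range.2 (by omega)
  · intro b _ hb
    rw [if_neg (Ne.symm hb), mul_zero]

/-- `x` has rank `t` and the principal ideal of `x` is boolean of rank `t`. -/
def BoolCone {Q : Type*} [PartialOrder Q] (ρ : Q → ℕ) (x : Q) : Prop :=
  ∃ φ : Finset (Fin (ρ x)) ↪o Q, (∀ y, y ≤ x ↔ ∃ s, φ s = y) ∧ ∀ s, ρ (φ s) = s.card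

theorem BoolCone.top {Q : Type*} [PartialOrder Q] (ρ : Q → ℕ) (x : Q)
    (φ : Finset (Fin (ρ x)) ↪o Q) (h : ∀ y, y ≤ x ↔ ∃ s, φ s = y) :
    φ Finset.univ = x := by
  apply le_antisymm ((h _).2 ⟨_, rfl⟩)
  obtain ⟨s, hs⟩ := (h x).1 le_rfl
  calc x = φ s := hs.symm
    _ ≤ φ Finset.univ := φ.monotone (Finset.subset_univ _)

theorem BoolCone.lt {Q : Type*} [PartialOrder Q] (ρ : Q → ℕ) (x y : Q) (h : BoolCone ρ x)
    (hyx : y < x) : ρ y < ρ x := by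
  obtain ⟨φ, h1, h2⟩ := h
  obtain ⟨s, hs⟩ := (h1 y).1 hyx.le
  have hlt : s < Finset.univ := by
    rw [← φ.lt_iff_lt, hs, BoolCone.top ρ x φ h1]; exact hyx
  have := Finset.card_lt_card hlt
  rw [← hs, h2]
  simpa using this

open Classical in
/-- The number of chains of a boolean lattice with rank set `T` and containing the top. -/
noncomputable def boolChains (t : ℕ) (T : Finset ℕ) : ℕ :=
  (Finset.univ.filter (fun c : Finset (Finset (Fin t)) =>
    IsChain (· ≤ ·) (c : Set (Finset (Fin t))) ∧ c.image Finset.card = T ∧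
      Finset.univ ∈ c)).card

open Classical in
theorem aux_cone_chains {Q : Type*} [Fintype Q] [PartialOrder Q] (ρ : Q → ℕ) (x : Q)
    (h : BoolCone ρ x) (T : Finset ℕ) :
    (Finset.univ.filter (fun c : Finset Q =>
      IsChain (· ≤ ·) (c : Set Q) ∧ c.image ρ = T ∧ x ∈ c ∧ ∀ y ∈ c, y ≤ x)).card
      = boolChains (ρ x) T := by
  obtain ⟨φ, h1, h2⟩ := h
  have htop := BoolCone.top ρ x φ h1
  symm
  unfold boolChains
  apply Finset.card_bij (fun c _ => c.map φ.toEmbedding)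
  · intro c hc
    simp only [Finset.mem_filter, Finset.mem_univ, true_and] at hc ⊢
    obtain ⟨hc1, hc2, hc3⟩ := hc
    refine ⟨?_, ?_, ?_, ?_⟩
    · rw [Finset.coe_map]
      rintro _ ⟨a, ha, rfl⟩ _ ⟨b, hb, rfl⟩ hne
      have hab : a ≠ b := fun e => hne (by rw [e])
      rcases hc1 ha hb hab with h | h
      · left; exact φ.monotone h
      · right; exact φ.monotone h
    · rw [← hc2]
      ext i
      simp [h2]
    · rw [Finset.mem_map]
      exact ⟨_, hc3, htop⟩
    · intro y hy
      obtain ⟨s, _, hs⟩ := Finset.mem_map.1 hy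
      exact (h1 y).2 ⟨s, hs⟩
  · intro a _ b _ hab
    exact Finset.map_injective _ hab
  · intro c hc
    simp only [Finset.mem_filter, Finset.mem_univ, true_and] at hc
    obtain ⟨hc1, hc2, hc3, hc4⟩ := hc
    have hmap : (Finset.univ.filter (fun s => φ s ∈ c)).map φ.toEmbedding = c := by
      ext y
      simp only [Finset.mem_map, Finset.mem_filter, Finset.mem_univ, true_and]
      constructor
      · rintro ⟨s, hs, rfl⟩; exact hs
      · intro hy
        obtain ⟨s, hs⟩ := (h1 y).1 (hc4 y hy)
        exact ⟨s, by rw [hs]; exact hy, hs⟩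
    refine ⟨Finset.univ.filter (fun s => φ s ∈ c), ?_, hmap⟩
    simp only [Finset.mem_filter, Finset.mem_univ, true_and]
    refine ⟨?_, ?_, ?_⟩
    · intro a ha b hb hne
      have ha' : φ a ∈ c := by simpa using ha
      have hb' : φ b ∈ c := by simpa using hb
      rcases hc1 ha' hb' (fun e => hne (φ.injective e)) with h | h
      · left; exact φ.le_iff_le.1 h
      · right; exact φ.le_iff_le.1 h
    · rw [← hc2]
      conv_rhs => rw [← hmap]
      ext i
      simp [h2]
    · rw [htop]; exact hc3

open Classical in
theorem aux_chain_count {Q : Type*} [Fintype Q] [PartialOrder Q] (ρ : Q → ℕ)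
    (T : Finset ℕ) (t : ℕ) (ht : t ∈ T) (hmax : ∀ s ∈ T, s ≤ t)
    (hc : ∀ x, ρ x ∈ T → BoolCone ρ x)
    (p : Q → Prop) :
    (Finset.univ.filter (fun c : Finset Q =>
      IsChain (· ≤ ·) (c : Set Q) ∧ c.image ρ = T ∧ ∃ x ∈ c, ρ x = t ∧ p x)).card
      = (Finset.univ.filter (fun x => ρ x = t ∧ p x)).card * boolChains t T := by
  have heq : (Finset.univ.filter (fun c : Finset Q =>
      IsChain (· ≤ ·) (c : Set Q) ∧ c.image ρ = T ∧ ∃ x ∈ c, ρ x = t ∧ p x))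
      = (Finset.univ.filter (fun x => ρ x = t ∧ p x)).biUnion (fun x =>
        Finset.univ.filter (fun c : Finset Q =>
          IsChain (· ≤ ·) (c : Set Q) ∧ c.image ρ = T ∧ x ∈ c ∧ ∀ y ∈ c, y ≤ x)) := by
    ext c
    simp only [Finset.mem_filter, Finset.mem_univ, true_and, Finset.mem_biUnion]
    constructor
    · rintro ⟨h1, h2, x, hx, hxt, hp⟩
      refine ⟨x, ⟨hxt, hp⟩, h1, h2, hx, ?_⟩
      intro y hy
      by_contra hle
      have hne : x ≠ y := fun e => hle (by rw [e])
      have hyT : ρ y ∈ T := by rw [← h2]; exact Finset.mem_image_of_mem _ hy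
      rcases h1 hx hy hne with h | h
      · have := BoolCone.lt ρ y x (hc y hyT) (lt_of_le_of_ne h hne)
        have := hmax _ hyT
        omega
      · exact hle h
    · rintro ⟨x, ⟨hxt, hp⟩, h1, h2, hx, _⟩
      exact ⟨h1, h2, x, hx, hxt, hp⟩
  rw [heq, Finset.card_biUnion, Finset.sum_const_nat]
  · intro x hx
    have hxt := (Finset.mem_filter.1 hx).2.1
    rw [aux_cone_chains ρ x (hc x (by rw [hxt]; exact ht)), hxt]
  · intro x _ y _ hne
    rw [Function.onFun, Finset.disjoint_left]
    intro c h1 h2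
    simp only [Finset.mem_filter, Finset.mem_univ, true_and] at h1 h2
    exact hne (le_antisymm (h2.2.2.2 _ h1.2.2.1) (h1.2.2.2 _ h2.2.2.1))

theorem aux_cone_finset (N : ℕ) (s : Finset (Fin N)) : BoolCone Finset.card s := by
  refine ⟨Finset.mapEmbedding (s.orderEmbOfFin rfl).toEmbedding, ?_, ?_⟩
  · intro y
    constructor
    · intro hy
      refine ⟨Finset.univ.filter (fun i => s.orderEmbOfFin rfl i ∈ y), ?_⟩
      ext a
      simp only [Finset.mapEmbedding_apply, Finset.mem_map, Finset.mem_filter, Finset.mem_univ,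
        true_and]
      constructor
      · rintro ⟨i, hi, rfl⟩; exact hi
      · intro ha
        have : a ∈ Set.range (s.orderEmbOfFin rfl) := by
          rw [Finset.range_orderEmbOfFin]; exact hy ha
        obtain ⟨i, hi⟩ := this
        exact ⟨i, by rw [hi]; exact ha, hi⟩
    · rintro ⟨u, rfl⟩ a ha
      obtain ⟨i, _, hi⟩ := Finset.mem_map.1 ha
      rw [← hi]
      exact Finset.orderEmbOfFin_mem s rfl i
  · intro u
    simp [Finset.mapEmbedding_apply]

theorem aux_cone_poset {P : Type*} [Fintype P] [PartialOrder P] [OrderBot P]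
    (n : ℕ) (rk : P → ℕ) (hrk : IsRankFunction rk) (hsimp : SimplicialOfRank P n) (x : P) :
    BoolCone rk x := by
  obtain ⟨m, hxm, hm⟩ : ∃ m, x ≤ m ∧ IsMax m := by
    obtain ⟨m, hm1, hm2⟩ := (Set.toFinite (Set.univ : Set P)).exists_le_maximal (Set.mem_univ x)
    exact ⟨m, hm1, fun y hy => hm2.2 (Set.mem_univ y) hy⟩
  obtain ⟨e⟩ := hsimp m hm
  have hr : ∀ s : Finset (Fin n), rk (e.symm s) = s.card := by
    intro s
    induction s using Finset.induction_on with
    | empty =>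
      have : e.symm ∅ = ⟨⊥, by simp⟩ := by
        rw [OrderIso.symm_apply_eq]
        apply le_antisymm
        · exact Finset.empty_subset _
        · have h0 : (⟨⊥, by simp⟩ : Set.Icc (⊥ : P) m) ≤ e.symm ∅ :=
            (show (⊥ : P) ≤ _ from bot_le)
          have h1 := e.monotone h0
          rwa [e.apply_symm_apply] at h1
      rw [this]
      simpa using hrk.1
    | insert a s ha ih =>
      have hcov : s ⋖ insert a s := Finset.covBy_insert ha
      have hcov2 : e.symm s ⋖ e.symm (insert a s) := (apply_covBy_apply_iff e.symm).2 hcov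
      have hcov3 : (e.symm s : P) ⋖ (e.symm (insert a s) : P) := by
        have hoc : (Set.range (OrderEmbedding.subtype (fun y => y ∈ Set.Icc (⊥ : P) m))).OrdConnected := by
          have : Set.range (OrderEmbedding.subtype (fun y => y ∈ Set.Icc (⊥ : P) m)) = Set.Icc ⊥ m := by
            ext y; simp
          rw [this]; exact Set.ordConnected_Icc
        exact hcov2.image (OrderEmbedding.subtype _) hoc
      rw [hrk.2 _ _ hcov3, ih, Finset.card_insert_of_notMem ha]
  set s := e ⟨x, by simp, hxm⟩ with hs
  have hxs : (e.symm s : P) = x := by rw [hs]; simp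
  have hcard : s.card = rk x := by rw [← hr, hxs]
  obtain ⟨ψ, hψ1, hψ2⟩ := aux_cone_finset n s
  unfold BoolCone
  rw [← hcard]
  refine ⟨ψ.trans (e.symm.toOrderEmbedding.trans (OrderEmbedding.subtype _)), ?_, ?_⟩
  · intro y
    constructor
    · intro hy
      have hym : y ∈ Set.Icc (⊥ : P) m := ⟨bot_le, hy.trans hxm⟩
      have : e ⟨y, hym⟩ ≤ s := by
        rw [hs]; exact e.monotone hy
      obtain ⟨u, hu⟩ := (hψ1 _).1 this
      refine ⟨u, ?_⟩
      simp [hu]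
    · rintro ⟨u, rfl⟩
      have : ψ u ≤ s := (hψ1 _).2 ⟨u, rfl⟩
      have h2 := e.symm.monotone this
      rw [← hxs]
      exact h2
  · intro u
    exact (hr (ψ u)).trans (hψ2 u)

/-- The set of the last `t` values of the permutation `w`. -/
def tailSet {n : ℕ} (w : Equiv.Perm (Fin (n + 1))) (t : ℕ) : Finset (Fin (n + 1)) :=
  Finset.univ.filter (fun j => n + 1 ≤ (w.symm j).val + t)

theorem mem_tailSet {n : ℕ} (w : Equiv.Perm (Fin (n + 1))) (t : ℕ) (i : Fin (n + 1)) :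
    w i ∈ tailSet w t ↔ n + 1 ≤ i.val + t := by
  simp [tailSet]

theorem tailSet_mono {n : ℕ} (w : Equiv.Perm (Fin (n + 1))) {s t : ℕ} (h : s ≤ t) :
    tailSet w s ⊆ tailSet w t := by
  intro j hj
  simp only [tailSet, Finset.mem_filter, Finset.mem_univ, true_and] at hj ⊢
  omega

theorem tailSet_card {n : ℕ} (w : Equiv.Perm (Fin (n + 1))) (t : ℕ) (ht : t ≤ n) :
    (tailSet w t).card = t := by
  have h1 : (tailSet w t) = (Finset.univ.filter
      (fun i : Fin (n + 1) => n + 1 ≤ i.val + t)).map w.toEmbedding := by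
    ext j
    simp only [tailSet, Finset.mem_map, Finset.mem_filter, Finset.mem_univ, true_and]
    constructor
    · intro h; exact ⟨w.symm j, h, by simp⟩
    · rintro ⟨i, hi, rfl⟩; simpa using hi
  rw [h1, Finset.card_map]
  rcases Nat.eq_zero_or_pos t with rfl | hpos
  · rw [Finset.card_eq_zero, Finset.filter_eq_empty_iff]
    intro i _
    have := i.isLt
    omega
  · have h2 : (Finset.univ.filter (fun i : Fin (n + 1) => n + 1 ≤ i.val + t))
        = Finset.Ici (⟨n + 1 - t, by omega⟩ : Fin (n + 1)) := by
      ext i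
      simp only [Finset.mem_filter, Finset.mem_univ, true_and, Finset.mem_Ici, Fin.le_def]
      omega
    rw [h2, Fin.card_Ici]
    simp only
    omega

theorem aux_upper (n : ℕ) (U : Finset (Fin (n + 1)))
    (hU : ∀ i i', i ≤ i' → i ∈ U → i' ∈ U) (i : Fin (n + 1)) :
    i ∈ U ↔ n + 1 ≤ i.val + U.card := by
  have hlt := i.isLt
  constructor
  · intro hi
    have : Finset.Ici i ⊆ U := fun j hj => hU i j (Finset.mem_Ici.1 hj) hi
    have := Finset.card_le_card this
    rw [Fin.card_Ici] at this
    omega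
  · intro h
    by_contra hi
    have : U ⊆ Finset.Ioi i := by
      intro j hj
      rw [Finset.mem_Ioi]
      by_contra hji
      exact hi (hU j i (not_lt.1 hji) hj)
    have := Finset.card_le_card this
    rw [Fin.card_Ioi] at this
    omega

theorem aux_no_des {n : ℕ} (w : Equiv.Perm (Fin (n + 1))) (i : Fin (n + 1)) :
    ∀ (m : ℕ) (hm : m < n + 1), i.val < m → (∀ d ∈ desSet w, d ≤ i.val ∨ m < d) →
      w i < w ⟨m, hm⟩ := by
  intro m
  induction m with
  | zero => intro _ h; omega
  | succ m ih =>
    intro hm him hd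
    have hstep : w ⟨m, by omega⟩ < w ⟨m + 1, hm⟩ := by
      by_contra hle
      have hne : w ⟨m, by omega⟩ ≠ w ⟨m + 1, hm⟩ := by
        intro e
        have := w.injective e
        simp at this
      have hlt : w ⟨m + 1, hm⟩ < w ⟨m, by omega⟩ :=
        lt_of_le_of_ne (not_lt.1 hle) (Ne.symm hne)
      have : m + 1 ∈ desSet w := by
        unfold desSet
        rw [Finset.mem_image]
        refine ⟨⟨m, by omega⟩, ?_, rfl⟩
        simp only [Finset.mem_filter, Finset.mem_univ, true_and]
        exact hlt
      have := hd _ this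
      omega
    rcases Nat.lt_or_ge i.val m with h | h
    · refine lt_trans (ih (by omega) h ?_) hstep
      intro d hd'
      have := hd d hd'
      omega
    · have : i = ⟨m, by omega⟩ := Fin.ext (by simp only; omega)
      rw [this]; exact hstep

open Classical in
theorem aux_perm_chain (n : ℕ) (T : Finset ℕ) (t : ℕ) (htT : t ∈ T) (hmax : ∀ s ∈ T, s ≤ t)
    (htn : t ≤ n) (k : Fin (n + 1)) :
    (Finset.univ.filter (fun w : Equiv.Perm (Fin (n + 1)) =>
      w 0 = k ∧ desSet w ⊆ T.image (fun s => n + 1 - s))).card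
    = (Finset.univ.filter (fun c : Finset (Finset (Fin (n + 1))) =>
      IsChain (· ≤ ·) (c : Set (Finset (Fin (n + 1)))) ∧ c.image Finset.card = T ∧
        ∃ C ∈ c, C.card = t ∧ (k ∉ C ∧ ∀ j < k, j ∈ C))).card := by
  have hTn : ∀ s ∈ T, s ≤ n := fun s hs => (hmax s hs).trans htn
  apply Finset.card_bij (fun w _ => T.image (tailSet w))
  · intro w hw
    simp only [Finset.mem_filter, Finset.mem_univ, true_and] at hw ⊢
    obtain ⟨hw0, hdes⟩ := hw
    refine ⟨?_, ?_, tailSet w t, Finset.mem_image_of_mem _ htT, tailSet_card w t htn, ?_, ?_⟩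
    · intro a ha b hb _
      obtain ⟨s, _, rfl⟩ := Finset.mem_image.1 (Finset.mem_coe.1 ha)
      obtain ⟨s', _, rfl⟩ := Finset.mem_image.1 (Finset.mem_coe.1 hb)
      rcases le_total s s' with h | h
      · left; exact tailSet_mono w h
      · right; exact tailSet_mono w h
    · rw [Finset.image_image]
      conv_rhs => rw [← Finset.image_id (s := T)]
      apply Finset.image_congr
      intro s hs
      exact tailSet_card w s (hTn s hs)
    · rw [← hw0, mem_tailSet]
      simp only [Fin.val_zero]; omega
    · intro j hj
      by_contra hjn
      obtain ⟨i, rfl⟩ := w.surjective j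
      rw [mem_tailSet] at hjn
      rw [← hw0] at hj
      have hi0 : 0 < i.val := by
        rcases Nat.eq_zero_or_pos i.val with h | h
        · have : i = 0 := Fin.ext h
          rw [this] at hj
          exact absurd hj (lt_irrefl _)
        · exact h
      have := aux_no_des w 0 i.val i.isLt hi0 (by
        intro d hd
        obtain ⟨s, hs, rfl⟩ := Finset.mem_image.1 (hdes hd)
        have := hmax s hs
        right; omega)
      exact absurd hj (not_lt.2 this.le)
  · intro w hw w' hw' heq
    simp only [Finset.mem_filter, Finset.mem_univ, true_and] at hw hw'
    have htail : ∀ s ∈ T, tailSet w s = tailSet w' s := by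
      intro s hs
      have : tailSet w s ∈ T.image (tailSet w') := by
        rw [← heq]; exact Finset.mem_image_of_mem _ hs
      obtain ⟨s', hs', h⟩ := Finset.mem_image.1 this
      have hc := congrArg Finset.card h
      rw [tailSet_card w' s' (hTn s' hs'), tailSet_card w s (hTn s hs)] at hc
      rw [← h, hc]
    have hsort : ∀ v : Equiv.Perm (Fin (n + 1)), desSet v ⊆ T.image (fun s => n + 1 - s) →
        v = Tuple.sort (fun j => (T.filter (fun s => j ∈ tailSet v s)).card) := by
      intro v hv
      have hsub : ∀ i i' : Fin (n + 1), i ≤ i' →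
          T.filter (fun s => v i ∈ tailSet v s) ⊆ T.filter (fun s => v i' ∈ tailSet v s) := by
        intro i i' hii s hs
        rw [Finset.mem_filter, mem_tailSet] at hs ⊢
        have : i.val ≤ i'.val := hii
        exact ⟨hs.1, by omega⟩
      rw [Tuple.eq_sort_iff]
      constructor
      · intro i i' hii
        exact Finset.card_le_card (hsub i i' hii)
      · intro i i' hii hcard
        have hEq := Finset.eq_of_subset_of_card_le (hsub i i' hii.le) (le_of_eq hcard.symm)
        apply aux_no_des v i i'.val i'.isLt hii
        intro d hd
        obtain ⟨s, hs, rfl⟩ := Finset.mem_image.1 (hv hd)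
        by_contra hcon
        have hs' : s ∈ T.filter (fun s => v i' ∈ tailSet v s) := by
          rw [Finset.mem_filter, mem_tailSet]
          exact ⟨hs, by omega⟩
        rw [← hEq, Finset.mem_filter, mem_tailSet] at hs'
        omega
    rw [hsort w hw.2, hsort w' hw'.2]
    congr 1
    funext j
    congr 1
    apply Finset.filter_congr
    intro s hs
    rw [htail s hs]
  · intro c hc
    simp only [Finset.mem_filter, Finset.mem_univ, true_and] at hc
    obtain ⟨hch, himg, C₀, hC₀, hC₀t, hk, hk'⟩ := hc
    set f : Fin (n + 1) → ℕ := fun j => (c.filter (fun C => j ∈ C)).card with hf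
    obtain ⟨w, hw⟩ : ∃ w, w = Tuple.sort f := ⟨_, rfl⟩
    obtain ⟨hmono, hstab⟩ := Tuple.eq_sort_iff.1 hw
    have hup : ∀ C ∈ c, ∀ i i' : Fin (n + 1), i ≤ i' → w i ∈ C → w i' ∈ C := by
      intro C hC i i' hii hi
      by_contra hi'
      have hlt : f (w i') < f (w i) := by
        apply Finset.card_lt_card
        rw [Finset.ssubset_iff_of_subset]
        · refine ⟨C, ?_, ?_⟩
          · exact Finset.mem_filter.2 ⟨hC, hi⟩
          · intro h
            exact hi' (Finset.mem_filter.1 h).2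
        · intro C' hC'
          rw [Finset.mem_filter] at hC' ⊢
          refine ⟨hC'.1, ?_⟩
          by_cases hCC : C = C'
          · rw [← hCC]; exact hi
          · rcases hch hC hC'.1 hCC with h | h
            · exact h hi
            · exact absurd (h hC'.2) hi'
      exact absurd (hmono hii) (not_le.2 hlt)
    have hmem : ∀ C ∈ c, ∀ i : Fin (n + 1), w i ∈ C ↔ n + 1 ≤ i.val + C.card := by
      intro C hC i
      have := aux_upper n (C.map w.symm.toEmbedding) (by
        intro a a' haa ha
        simp only [Finset.mem_map_equiv, Equiv.symm_symm] at ha ⊢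
        exact hup C hC a a' haa ha) i
      rw [Finset.card_map] at this
      simpa only [Finset.mem_map_equiv, Equiv.symm_symm] using this
    have htail : ∀ C ∈ c, tailSet w C.card = C := by
      intro C hC
      ext j
      obtain ⟨i, rfl⟩ := w.surjective j
      rw [mem_tailSet, hmem C hC]
    refine ⟨w, ?_, ?_⟩
    · simp only [Finset.mem_filter, Finset.mem_univ, true_and]
      constructor
      · have h0 : w 0 ∉ C₀ := by
          rw [hmem C₀ hC₀, hC₀t]
          simp only [Fin.val_zero]; omega
        have hle : k ≤ w 0 := by
          by_contra h
          exact h0 (hk' _ (not_le.1 h))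
        by_contra hne
        have hlt : k < w 0 := lt_of_le_of_ne hle (Ne.symm hne)
        obtain ⟨i, rfl⟩ := w.surjective k
        have hi0 : 0 < i := by
          rw [Fin.pos_iff_ne_zero]
          rintro rfl
          exact lt_irrefl _ hlt
        have hz : ∀ a : Fin (n + 1), w a ∉ C₀ → f (w a) = 0 := by
          intro a ha
          rw [hmem C₀ hC₀, hC₀t] at ha
          rw [hf]
          simp only [Finset.card_eq_zero, Finset.filter_eq_empty_iff]
          intro C hC
          rw [hmem C hC]
          have : C.card ∈ T := by rw [← himg]; exact Finset.mem_image_of_mem _ hC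
          have := hmax _ this
          omega
        have := hstab 0 i hi0 (by rw [hz 0 h0, hz i hk])
        exact absurd hlt (not_lt.2 this.le)
      · intro d hd
        unfold desSet at hd
        obtain ⟨i, hi, rfl⟩ := Finset.mem_image.1 hd
        simp only [Finset.mem_filter, Finset.mem_univ, true_and] at hi
        have hii : i.castSucc < i.succ := Fin.castSucc_lt_succ
        have hne : f (w i.castSucc) ≠ f (w i.succ) := by
          intro e
          exact absurd (hstab _ _ hii e) (not_lt.2 hi.le)
        have hlt : f (w i.castSucc) < f (w i.succ) := lt_of_le_of_ne (hmono hii.le) hne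
        obtain ⟨C, hC, hC'⟩ : ∃ C ∈ c.filter (fun C => w i.succ ∈ C),
            C ∉ c.filter (fun C => w i.castSucc ∈ C) := by
          by_contra hcon
          push Not at hcon
          exact absurd (Finset.card_le_card hcon) (not_le.2 hlt)
        rw [Finset.mem_filter] at hC hC'
        obtain ⟨hCc, hC⟩ := hC
        have hC'' : w i.castSucc ∉ C := fun h => hC' ⟨hCc, h⟩
        rw [hmem C hCc] at hC hC''
        simp only [Fin.val_succ, Fin.val_castSucc] at hC hC''
        rw [Finset.mem_image]
        refine ⟨C.card, ?_, by omega⟩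
        rw [← himg]; exact Finset.mem_image_of_mem _ hCc
    · rw [← himg, Finset.image_image]
      conv_rhs => rw [← Finset.image_id (s := c)]
      apply Finset.image_congr
      intro C hC
      exact htail C hC

open Classical in
theorem aux_count_sets (n t : ℕ) (htn : t ≤ n) (k : Fin (n + 1)) :
    (Finset.univ.filter (fun C : Finset (Fin (n + 1)) =>
      C.card = t ∧ (k ∉ C ∧ ∀ j < k, j ∈ C))).card = (n - k.val).choose (n - t) := by
  have h1 : (Finset.powersetCard (n - t) (Finset.Ioi k)).card = (n - k.val).choose (n - t) := by
    rw [Finset.card_powersetCard, Fin.card_Ioi]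
    congr 1
  rw [← h1]
  refine Finset.card_bij' (fun C _ => Cᶜ.erase k) (fun U _ => (insert k U)ᶜ) ?_ ?_ ?_ ?_
  · intro C hC
    simp only [Finset.mem_filter, Finset.mem_univ, true_and] at hC
    obtain ⟨h1, h2, h3⟩ := hC
    rw [Finset.mem_powersetCard]
    constructor
    · intro j hj
      rw [Finset.mem_erase, Finset.mem_compl] at hj
      rw [Finset.mem_Ioi]
      by_contra hle
      exact hj.2 (h3 j (lt_of_le_of_ne (not_lt.1 hle) hj.1))
    · rw [Finset.card_erase_of_mem (Finset.mem_compl.2 h2), Finset.card_compl, Fintype.card_fin]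
      omega
  · intro U hU
    rw [Finset.mem_powersetCard] at hU
    obtain ⟨h1, h2⟩ := hU
    have hkU : k ∉ U := fun h => lt_irrefl _ (Finset.mem_Ioi.1 (h1 h))
    simp only [Finset.mem_filter, Finset.mem_univ, true_and]
    refine ⟨?_, ?_, ?_⟩
    · rw [Finset.card_compl, Fintype.card_fin, Finset.card_insert_of_notMem hkU]
      omega
    · simp
    · intro j hj
      rw [Finset.mem_compl, Finset.mem_insert]
      rintro (rfl | h)
      · exact lt_irrefl _ hj
      · exact lt_irrefl _ (lt_trans hj (Finset.mem_Ioi.1 (h1 h)))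
  · intro C hC
    simp only [Finset.mem_filter, Finset.mem_univ, true_and] at hC
    rw [Finset.insert_erase (Finset.mem_compl.2 hC.2.1), compl_compl]
  · intro U hU
    rw [Finset.mem_powersetCard] at hU
    have hkU : k ∉ U := fun h => lt_irrefl _ (Finset.mem_Ioi.1 (hU.1 h))
    rw [compl_compl, Finset.erase_insert hkU]

open Classical in
theorem aux_perm_count (n : ℕ) (T : Finset ℕ) (t : ℕ) (htT : t ∈ T) (hmax : ∀ s ∈ T, s ≤ t)
    (htn : t ≤ n) (k : Fin (n + 1)) :
    (Finset.univ.filter (fun w : Equiv.Perm (Fin (n + 1)) =>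
      w 0 = k ∧ desSet w ⊆ T.image (fun s => n + 1 - s))).card
    = (n - k.val).choose (n - t) * boolChains t T := by
  have h := aux_chain_count Finset.card T t htT hmax (fun x _ => aux_cone_finset _ x)
    (fun C => k ∉ C ∧ ∀ j < k, j ∈ C)
  rw [aux_perm_chain n T t htT hmax htn k, ← aux_count_sets n t htn k]
  convert h

theorem aux_rk_zero {P : Type*} [Fintype P] [PartialOrder P] [OrderBot P]
    (n : ℕ) (rk : P → ℕ) (hrk : IsRankFunction rk) (hsimp : SimplicialOfRank P n) (x : P) :
    rk x = 0 ↔ x = ⊥ := by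
  constructor
  · intro h
    by_contra hne
    have := BoolCone.lt rk x ⊥ (aux_cone_poset n rk hrk hsimp x) (bot_lt_iff_ne_bot.2 hne)
    omega
  · rintro rfl; exact hrk.1

open Classical in
theorem aux_flagF {P : Type*} [Fintype P] [PartialOrder P] [OrderBot P]
    (n : ℕ) (rk : P → ℕ) (hrk : IsRankFunction rk) (hsimp : SimplicialOfRank P n)
    (T : Finset ℕ) (hT : 0 ∉ T) (t : ℕ) (ht : t ∈ insert 0 T) (hmax : ∀ s ∈ insert 0 T, s ≤ t) :
    flagF rk T = fvec rk t * boolChains t (insert 0 T) := by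
  have h1 := aux_chain_count rk (insert 0 T) t ht hmax
    (fun x _ => aux_cone_poset n rk hrk hsimp x) (fun _ => True)
  simp only [and_true] at h1
  have hz := aux_rk_zero n rk hrk hsimp
  unfold fvec
  rw [← h1]
  unfold flagF
  rw [Nat.card_eq_fintype_card, Fintype.card_subtype]
  refine Finset.card_bij' (fun c _ => insert ⊥ c) (fun c _ => c.erase ⊥) ?_ ?_ ?_ ?_
  · intro c hc
    simp only [Finset.mem_filter, Finset.mem_univ, true_and] at hc ⊢
    obtain ⟨h1, h2, h3⟩ := hc
    have himg : (insert ⊥ c).image rk = insert 0 T := by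
      rw [Finset.image_insert, h3, hrk.1]
    refine ⟨?_, himg, ?_⟩
    · rw [Finset.coe_insert]
      exact h1.insert (fun b _ _ => Or.inl bot_le)
    · rw [← himg] at ht
      exact Finset.mem_image.1 ht
  · intro c hc
    simp only [Finset.mem_filter, Finset.mem_univ, true_and] at hc ⊢
    obtain ⟨h1, h2, _⟩ := hc
    refine ⟨h1.mono (by simp), by simp, ?_⟩
    ext i
    simp only [Finset.mem_image, Finset.mem_erase]
    constructor
    · rintro ⟨x, ⟨hx, hxc⟩, rfl⟩
      have : rk x ∈ insert 0 T := by rw [← h2]; exact Finset.mem_image_of_mem _ hxc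
      rcases Finset.mem_insert.1 this with h | h
      · exact absurd ((hz x).1 h) hx
      · exact h
    · intro hi
      have : i ∈ c.image rk := by rw [h2]; exact Finset.mem_insert_of_mem hi
      obtain ⟨x, hxc, rfl⟩ := Finset.mem_image.1 this
      refine ⟨x, ⟨?_, hxc⟩, rfl⟩
      rintro rfl
      rw [hrk.1] at hi
      exact hT hi
  · intro c hc
    simp only [Finset.mem_filter, Finset.mem_univ, true_and] at hc
    exact Finset.erase_insert hc.2.1
  · intro c hc
    simp only [Finset.mem_filter, Finset.mem_univ, true_and] at hc
    apply Finset.insert_erase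
    have : 0 ∈ c.image rk := by rw [hc.2.1]; simp
    obtain ⟨x, hx, hx0⟩ := Finset.mem_image.1 this
    rw [← (hz x).1 hx0]; exact hx

/-- The reversal `s ↦ n + 1 - s` on sets. -/
def revSet (n : ℕ) (S : Finset ℕ) : Finset ℕ := S.image (fun s => n + 1 - s)

theorem mem_revSet (n : ℕ) (S : Finset ℕ) (hS : S ⊆ Finset.Icc 1 n) (i : ℕ) :
    i ∈ revSet n S ↔ 1 ≤ i ∧ i ≤ n ∧ n + 1 - i ∈ S := by
  unfold revSet
  rw [Finset.mem_image]
  constructor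
  · rintro ⟨s, hs, rfl⟩
    have := Finset.mem_Icc.1 (hS hs)
    have e : n + 1 - (n + 1 - s) = s := by omega
    rw [e]
    exact ⟨by omega, by omega, hs⟩
  · rintro ⟨h1, h2, h3⟩
    exact ⟨_, h3, by omega⟩

theorem revSet_Icc (n : ℕ) (S : Finset ℕ) (hS : S ⊆ Finset.Icc 1 n) :
    revSet n S ⊆ Finset.Icc 1 n := by
  intro i hi
  rw [mem_revSet n S hS] at hi
  rw [Finset.mem_Icc]
  exact ⟨hi.1, hi.2.1⟩

theorem revSet_revSet (n : ℕ) (S : Finset ℕ) (hS : S ⊆ Finset.Icc 1 n) :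
    revSet n (revSet n S) = S := by
  ext i
  rw [mem_revSet n _ (revSet_Icc n S hS), mem_revSet n S hS]
  constructor
  · rintro ⟨h1, h2, h3, h4, h5⟩
    have e : n + 1 - (n + 1 - i) = i := by omega
    rwa [e] at h5
  · intro hi
    have := Finset.mem_Icc.1 (hS hi)
    have e : n + 1 - (n + 1 - i) = i := by omega
    rw [e]
    exact ⟨by omega, by omega, by omega, by omega, hi⟩

theorem revSet_card (n : ℕ) (S : Finset ℕ) (hS : S ⊆ Finset.Icc 1 n) :
    (revSet n S).card = S.card := by
  apply Finset.card_image_of_injOn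
  intro a ha b hb hab
  have := Finset.mem_Icc.1 (hS ha)
  have := Finset.mem_Icc.1 (hS hb)
  simp only at hab
  omega

theorem revSet_isolated (n : ℕ) (S : Finset ℕ) (hS : S ⊆ Finset.Icc 1 n) (h : IsolatedSet S) :
    IsolatedSet (revSet n S) := by
  intro i hi hi'
  rw [mem_revSet n S hS] at hi hi'
  apply h _ hi'.2.2
  have e : n + 1 - (i + 1) + 1 = n + 1 - i := by omega
  rw [e]; exact hi.2.2

theorem desSet_Icc {n : ℕ} (w : Equiv.Perm (Fin (n + 1))) : desSet w ⊆ Finset.Icc 1 n := by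
  intro d hd
  unfold desSet at hd
  obtain ⟨i, _, rfl⟩ := Finset.mem_image.1 hd
  have := i.isLt
  rw [Finset.mem_Icc]; omega

/-- Number of permutations with prescribed first value and descent set. -/
def desCount (n k : ℕ) (U : Finset ℕ) : ℕ :=
  (Finset.univ.filter (fun w : Equiv.Perm (Fin (n + 1)) => (w 0 : ℕ) = k ∧ desSet w = U)).card

theorem aux_alpha {P : Type*} [Fintype P] [PartialOrder P] [OrderBot P]
    (n : ℕ) (rk : P → ℕ) (hrk : IsRankFunction rk) (hsimp : SimplicialOfRank P n)
    (T : Finset ℕ) (hT : T ⊆ Finset.Icc 1 n) :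
    (flagF rk T : ℝ) = ∑ k ∈ Finset.range (n + 1), (hvec rk n k : ℝ) *
      ((Finset.univ.filter (fun w : Equiv.Perm (Fin (n + 1)) =>
        (w 0 : ℕ) = k ∧ revSet n (desSet w) ⊆ T)).card : ℝ) := by
  classical
  have h0 : 0 ∉ T := fun h => by have := Finset.mem_Icc.1 (hT h); omega
  obtain ⟨t, ht, hmax⟩ := Finset.exists_max_image (insert 0 T) id ⟨0, by simp⟩
  simp only [id] at hmax
  have htn : t ≤ n := by
    rcases Finset.mem_insert.1 ht with h | h
    · omega
    · exact (Finset.mem_Icc.1 (hT h)).2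
  rw [aux_flagF n rk hrk hsimp T h0 t ht hmax, Nat.cast_mul, aux_fh n t htn rk, Finset.sum_mul]
  apply Finset.sum_congr rfl
  intro k hk
  rw [mul_assoc]
  congr 1
  have := aux_perm_count n (insert 0 T) t ht hmax htn ⟨k, Finset.mem_range.1 hk⟩
  rw [← Nat.cast_mul]
  simp only at this
  rw [← this]
  congr 2
  apply Finset.filter_congr
  intro w _
  have hd := desSet_Icc w
  rw [Fin.ext_iff]
  refine and_congr Iff.rfl ?_
  constructor
  · intro h i hi
    rw [mem_revSet n _ hd] at hi
    obtain ⟨s, hs, hsi⟩ := Finset.mem_image.1 (h hi.2.2)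
    have hs' : s ∈ T := by
      rcases Finset.mem_insert.1 hs with h | h
      · omega
      · exact h
    have := Finset.mem_Icc.1 (hT hs')
    have : s = i := by omega
    rwa [← this]
  · intro h d hdd
    have := Finset.mem_Icc.1 (hd hdd)
    rw [Finset.mem_image]
    refine ⟨n + 1 - d, Finset.mem_insert_of_mem (h ?_), by omega⟩
    exact Finset.mem_image_of_mem _ hdd

theorem aux_mobius (S V : Finset ℕ) :
    ∑ T ∈ S.powerset, (-1 : ℝ) ^ ((S \ T).card) * (if V ⊆ T then 1 else 0)
      = if V = S then 1 else 0 := by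
  by_cases hVS : V ⊆ S
  · have h := Finset.prod_add (fun _ => (1 : ℝ)) (fun i => if i ∈ V then 0 else (-1 : ℝ)) S
    have h1 : ∀ T ∈ S.powerset, (-1 : ℝ) ^ ((S \ T).card) * (if V ⊆ T then 1 else 0)
        = (∏ i ∈ T, (1 : ℝ)) * ∏ i ∈ S \ T, (if i ∈ V then 0 else (-1 : ℝ)) := by
      intro T _
      rw [Finset.prod_const_one, one_mul]
      split_ifs with hVT
      · rw [mul_one, Finset.prod_congr rfl (g := fun _ => (-1 : ℝ)), Finset.prod_const]
        intro i hi
        rw [if_neg]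
        intro hiV
        exact (Finset.mem_sdiff.1 hi).2 (hVT hiV)
      · rw [mul_zero]
        obtain ⟨i, hi, hiT⟩ := Finset.not_subset.1 hVT
        symm
        apply Finset.prod_eq_zero (Finset.mem_sdiff.2 ⟨hVS hi, hiT⟩)
        rw [if_pos hi]
    rw [Finset.sum_congr rfl h1, ← h]
    split_ifs with hV
    · apply Finset.prod_eq_one
      intro i hi
      rw [hV, if_pos hi, add_zero]
    · have : ¬ S ⊆ V := fun h => hV (Finset.Subset.antisymm hVS h)
      obtain ⟨i, hi, hiV⟩ := Finset.not_subset.1 this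
      apply Finset.prod_eq_zero hi
      rw [if_neg hiV]; norm_num
  · rw [if_neg (fun h => hVS (by rw [h]))]
    apply Finset.sum_eq_zero
    intro T hT
    rw [if_neg (fun h => hVS (h.trans (Finset.mem_powerset.1 hT))), mul_zero]

theorem aux_beta {P : Type*} [Fintype P] [PartialOrder P] [OrderBot P]
    (n : ℕ) (rk : P → ℕ) (hrk : IsRankFunction rk) (hsimp : SimplicialOfRank P n)
    (S : Finset ℕ) (hS : S ⊆ Finset.Icc 1 n) :
    (flagH rk S : ℝ) = ∑ k ∈ Finset.range (n + 1), (hvec rk n k : ℝ) *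
      (desCount n k (revSet n S) : ℝ) := by
  unfold flagH
  push_cast
  have h1 : ∀ T ∈ S.powerset, (-1 : ℝ) ^ ((S \ T).card) * (flagF rk T : ℝ)
      = ∑ k ∈ Finset.range (n + 1), (hvec rk n k : ℝ) *
        ∑ w : Equiv.Perm (Fin (n + 1)) with (w 0 : ℕ) = k,
          (-1 : ℝ) ^ ((S \ T).card) * (if revSet n (desSet w) ⊆ T then 1 else 0) := by
    intro T hT
    rw [aux_alpha n rk hrk hsimp T ((Finset.mem_powerset.1 hT).trans hS), Finset.mul_sum]
    apply Finset.sum_congr rfl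
    intro k _
    rw [← Finset.mul_sum, Finset.sum_boole, Finset.filter_filter]
    ring
  rw [Finset.sum_congr rfl h1, Finset.sum_comm]
  apply Finset.sum_congr rfl
  intro k _
  rw [← Finset.mul_sum, Finset.sum_comm]
  congr 1
  rw [Finset.sum_congr rfl (fun w _ => aux_mobius S (revSet n (desSet w))), Finset.sum_boole,
    Finset.filter_filter]
  unfold desCount
  congr 2
  apply Finset.filter_congr
  intro w _
  refine and_congr Iff.rfl ?_
  constructor
  · intro h; rw [← h, revSet_revSet n _ (desSet_Icc w)]
  · intro h; rw [h, revSet_revSet n _ hS]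

theorem aux_sum_pPoly (n : ℕ) (h : ℕ → ℝ) (J : Finset ℕ) :
    ∑ S ∈ J.powerset.filter IsolatedSet,
      (∑ k ∈ Finset.range (n + 1), h k * (desCount n k S : ℝ)) •
        (Polynomial.X : Polynomial ℝ) ^ S.card
    = ∑ k ∈ Finset.range (n + 1), h k • pPoly n k ∅ J := by
  simp only [Finset.sum_smul]
  rw [Finset.sum_comm]
  apply Finset.sum_congr rfl
  intro k _
  unfold pPoly
  simp only [mul_smul]
  rw [← Finset.smul_sum]
  congr 1
  rw [← Finset.sum_fiberwise_of_maps_to (t := J.powerset.filter IsolatedSet)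
    (g := fun w : Equiv.Perm (Fin (n + 1)) => desSet w)]
  · apply Finset.sum_congr rfl
    intro S hS
    rw [Finset.mem_filter, Finset.mem_powerset] at hS
    rw [Finset.sum_congr rfl (g := fun _ => (Polynomial.X : Polynomial ℝ) ^ S.card),
      Finset.sum_const, Nat.cast_smul_eq_nsmul]
    · congr 1
      unfold desCount
      congr 1
      rw [Finset.filter_filter]
      apply Finset.filter_congr
      intro w _
      constructor
      · rintro ⟨h1, h2⟩
        refine ⟨⟨h1, ?_, Finset.empty_subset _, ?_⟩, h2⟩
        · rw [h2]; exact hS.2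
        · rw [h2]; exact hS.1
      · rintro ⟨⟨h1, _⟩, h2⟩
        exact ⟨h1, h2⟩
    · intro w hw
      rw [(Finset.mem_filter.1 hw).2]
  · intro w hw
    simp only [Finset.mem_filter, Finset.mem_univ, true_and, Finset.mem_powerset] at hw ⊢
    exact ⟨hw.2.2.2, hw.2.1⟩

theorem aux_rev_sum (n : ℕ) (I J : Finset ℕ) (hI : I ⊆ Finset.Icc 1 n) (hJ : J = revSet n I)
    (g : Finset ℕ → ℝ) :
    ∑ S ∈ I.powerset.filter IsolatedSet,
      g (revSet n S) • (Polynomial.X : Polynomial ℝ) ^ S.card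
    = ∑ S ∈ J.powerset.filter IsolatedSet, g S • (Polynomial.X : Polynomial ℝ) ^ S.card := by
  subst hJ
  have hJ' := revSet_Icc n I hI
  apply Finset.sum_bij' (fun S _ => revSet n S) (fun S _ => revSet n S)
  · intro S hS
    rw [Finset.mem_filter, Finset.mem_powerset] at hS ⊢
    exact ⟨Finset.image_subset_image hS.1, revSet_isolated n S (hS.1.trans hI) hS.2⟩
  · intro S hS
    rw [Finset.mem_filter, Finset.mem_powerset] at hS ⊢
    refine ⟨?_, revSet_isolated n S (hS.1.trans hJ') hS.2⟩
    rw [← revSet_revSet n I hI]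
    exact Finset.image_subset_image hS.1
  · intro S hS
    rw [Finset.mem_filter, Finset.mem_powerset] at hS
    exact revSet_revSet n S (hS.1.trans hI)
  · intro S hS
    rw [Finset.mem_filter, Finset.mem_powerset] at hS
    exact revSet_revSet n S (hS.1.trans hJ')
  · intro S hS
    rw [Finset.mem_filter, Finset.mem_powerset] at hS
    rw [revSet_card n S (hS.1.trans hI)]

theorem aux_main {P : Type*} [Fintype P] [PartialOrder P] [OrderBot P]
    (n : ℕ) (rk : P → ℕ) (hrk : IsRankFunction rk) (hsimp : SimplicialOfRank P n)
    (I J : Finset ℕ) (hI : I ⊆ Finset.Icc 1 n) (hJ : J = revSet n I) :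
    ∑ S ∈ I.powerset.filter IsolatedSet,
      (flagH rk S : ℝ) • (Polynomial.X : Polynomial ℝ) ^ S.card
    = ∑ k ∈ Finset.range (n + 1), (hvec rk n k : ℝ) • pPoly n k ∅ J := by
  rw [← aux_sum_pPoly, ← aux_rev_sum n I J hI hJ]
  apply Finset.sum_congr rfl
  intro S hS
  rw [Finset.mem_filter, Finset.mem_powerset] at hS
  rw [aux_beta n rk hrk hsimp S (hS.1.trans hI)]

theorem aux_main_dual {P : Type*} [Fintype P] [PartialOrder P] [OrderBot P]
    (n : ℕ) (rk : P → ℕ) (hrk : IsRankFunction rk) (hsimp : SimplicialOfRank P n)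
    (I : Finset ℕ) (hI : I ⊆ Finset.Icc 1 n) :
    ∑ S ∈ I.powerset.filter IsolatedSet,
      (flagHDual rk n S : ℝ) • (Polynomial.X : Polynomial ℝ) ^ S.card
    = ∑ k ∈ Finset.range (n + 1), (hvec rk n k : ℝ) • pPoly n k ∅ I := by
  rw [← aux_sum_pPoly]
  apply Finset.sum_congr rfl
  intro S hS
  rw [Finset.mem_filter, Finset.mem_powerset] at hS
  have hS' := hS.1.trans hI
  have : flagHDual rk n S = flagH rk (revSet n S) := rfl
  rw [this, aux_beta n rk hrk hsimp _ (revSet_Icc n S hS'), revSet_revSet n S hS']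

theorem statement16 {P : Type*} [Fintype P] [PartialOrder P] [OrderBot P]
    (n : ℕ) (hn : 2 ≤ n) (rk : P → ℕ)
    (hrk : IsRankFunction rk)
    (hsimp : SimplicialOfRank P n)
    (γ₁ γ₂ γ₃ γ₄ : ℕ → ℝ)
    (h1 : chowPoly rk n = ∑ i ∈ Finset.range (n / 2 + 1),
        Polynomial.C (γ₁ i) * Polynomial.X ^ i * (1 + Polynomial.X) ^ (n - 2 * i))
    (h2 : chowDualPoly rk n = ∑ i ∈ Finset.range (n / 2 + 1),
        Polynomial.C (γ₂ i) * Polynomial.X ^ i * (1 + Polynomial.X) ^ (n - 2 * i))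
    (h3 : chowAugPoly rk n = ∑ i ∈ Finset.range ((n + 1) / 2 + 1),
        Polynomial.C (γ₃ i) * Polynomial.X ^ i * (1 + Polynomial.X) ^ (n + 1 - 2 * i))
    (h4 : chowAugDualPoly rk n = ∑ i ∈ Finset.range ((n + 1) / 2 + 1),
        Polynomial.C (γ₄ i) * Polynomial.X ^ i * (1 + Polynomial.X) ^ (n + 1 - 2 * i)) :
    ((∑ i ∈ Finset.range (n / 2 + 1), Polynomial.C (γ₁ i) * Polynomial.X ^ i)
        = ∑ k ∈ Finset.range (n + 1), (hvec rk n k : ℝ) • pPoly n k ∅ (Finset.Icc 1 (n - 1))) ∧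
    ((∑ i ∈ Finset.range (n / 2 + 1), Polynomial.C (γ₂ i) * Polynomial.X ^ i)
        = ∑ k ∈ Finset.range (n + 1), (hvec rk n k : ℝ) • pPoly n k ∅ (Finset.Icc 2 n)) ∧
    ((∑ i ∈ Finset.range ((n + 1) / 2 + 1), Polynomial.C (γ₃ i) * Polynomial.X ^ i)
        = ∑ k ∈ Finset.range (n + 1), (hvec rk n k : ℝ) • pPoly n k ∅ (Finset.Icc 1 n)) ∧
    ((∑ i ∈ Finset.range ((n + 1) / 2 + 1), Polynomial.C (γ₄ i) * Polynomial.X ^ i)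
        = ∑ k ∈ Finset.range (n + 1), (hvec rk n k : ℝ) • pPoly n k ∅ (Finset.Icc 1 n)) := by
  have hI2 : Finset.Icc 2 n ⊆ Finset.Icc 1 n := Finset.Icc_subset_Icc (by omega) le_rfl
  have hc2 : ∀ S ∈ (Finset.Icc 2 n).powerset.filter IsolatedSet, 2 * S.card ≤ n := by
    intro S hS
    rw [Finset.mem_filter, Finset.mem_powerset] at hS
    have := aux_isolated_card 2 n S hS.1 hS.2
    omega
  have hc1 : ∀ S ∈ (Finset.Icc 1 n).powerset.filter IsolatedSet, 2 * S.card ≤ n + 1 := by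
    intro S hS
    rw [Finset.mem_filter, Finset.mem_powerset] at hS
    have := aux_isolated_card 1 n S hS.1 hS.2
    omega
  refine ⟨?_, ?_, ?_, ?_⟩
  · rw [aux_gamma n _ (fun S => (flagH rk S : ℝ)) γ₁ hc2 h1]
    apply aux_main n rk hrk hsimp _ _ hI2
    ext i
    rw [mem_revSet n _ hI2, Finset.mem_Icc, Finset.mem_Icc]
    omega
  · rw [aux_gamma n _ (fun S => (flagHDual rk n S : ℝ)) γ₂ hc2 h2]
    exact aux_main_dual n rk hrk hsimp _ hI2
  · rw [aux_gamma (n + 1) _ (fun S => (flagH rk S : ℝ)) γ₃ hc1 h3]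
    apply aux_main n rk hrk hsimp _ _ subset_rfl
    ext i
    rw [mem_revSet n _ subset_rfl, Finset.mem_Icc, Finset.mem_Icc]
    omega
  · rw [aux_gamma (n + 1) _ (fun S => (flagHDual rk n S : ℝ)) γ₄ hc1 h4]
    exact aux_main_dual n rk hrk hsimp _ subset_rfl
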